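/- Let (R,B) be an EIC problem with problem graph G=(V,E) in which every node requests at least one block and every requested block is held by some node. If (χ(G)−1)·χ(Ḡ) < |V|, then there exists a neighborhood partition {Ñ_1,…,Ñ_n} corresponding to an optimal task-based solution such that (C)_{(R,B)} ≤ χ(Ḡ) < Σ_{i=1}^n ω(Ḡ|_{Ñ_i}) ≤ (T)_{(R,B)}; in particular (C)_{(R,B)} < (T)_{(R,B)}. -/

import Mathlib

open Matrix BigOperators

namespace EIC

variable {n m : ℕ}

/-- The vertex set of the problem graph of the EIC problem `(R, B)`:
one vertex for each requirement pair `(u, a)` with `R u a = 1`. -/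
abbrev Vtx (R : Matrix (Fin n) (Fin m) (ZMod 2)) : Type :=
  {p : Fin n × Fin m // R p.1 p.2 = 1}

/-- `(R, B)` have disjoint supports: no position has both `B = 1` and `R = 1`. -/
def DisjointSupports (R B : Matrix (Fin n) (Fin m) (ZMod 2)) : Prop :=
  ∀ u a, ¬(B u a = 1 ∧ R u a = 1)

/-- The standard basis vector `e_a ∈ F_2^m`. -/
def e (m : ℕ) (a : Fin m) : Fin m → ZMod 2 := Pi.single a 1

/-- `β` (with rows indexed by `ι`) is a centralized linear broadcast solution to `(R, B)`:
for every requirement pair `(u, a)` there is `α` with `e_a = α · [β ; diag(B_u)]`. -/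
def IsCentralizedSolution (R B : Matrix (Fin n) (Fin m) (ZMod 2))
    {ι : Type} [Fintype ι] (β : Matrix ι (Fin m) (ZMod 2)) : Prop :=
  ∀ u a, R u a = 1 →
    ∃ α : ι ⊕ Fin m → ZMod 2,
      e m a = α ᵥ* Matrix.fromRows β (Matrix.diagonal (B u))

/-- `(C)_{(R,B)}`: the minimum length of a centralized linear broadcast solution. -/
noncomputable def Copt (R B : Matrix (Fin n) (Fin m) (ZMod 2)) : ℕ :=
  sInf {h | ∃ β : Matrix (Fin h) (Fin m) (ZMod 2), IsCentralizedSolution R B β}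

/-- The vertical concatenation of the matrices `β u`, `u ∈ [n]`. -/
def vconcat {h : Fin n → ℕ} (β : ∀ u : Fin n, Matrix (Fin (h u)) (Fin m) (ZMod 2)) :
    Matrix ((ℓ : Fin n) × Fin (h ℓ)) (Fin m) (ZMod 2) :=
  Matrix.of fun p => β p.1 p.2

/-- `β⁽¹⁾, …, β⁽ⁿ⁾` is a (decentralized) linear broadcast solution to `(R, B)`. -/
def IsBroadcastSolution (R B : Matrix (Fin n) (Fin m) (ZMod 2))
    {h : Fin n → ℕ} (β : ∀ u : Fin n, Matrix (Fin (h u)) (Fin m) (ZMod 2)) : Prop :=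
  (∀ u a, B u a = 0 → ∀ i, β u i a = 0) ∧
  ∀ u a, R u a = 1 →
    ∃ α : ((ℓ : Fin n) × Fin (h ℓ)) ⊕ Fin m → ZMod 2,
      e m a = α ᵥ* Matrix.fromRows (vconcat β) (Matrix.diagonal (B u))

/-- `(D)_{(R,B)}`: the minimum length of a decentralized linear broadcast solution. -/
noncomputable def Dopt (R B : Matrix (Fin n) (Fin m) (ZMod 2)) : ℕ :=
  sInf {s | ∃ (h : Fin n → ℕ) (β : ∀ u : Fin n, Matrix (Fin (h u)) (Fin m) (ZMod 2)),
    IsBroadcastSolution R B β ∧ ∑ u, h u = s}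

/-- A task-based solution: a linear broadcast solution where every requirement pair
`(u, a)` can be decoded from the broadcast of a single responsible sender `ℓ`. -/
def IsTaskBased (R B : Matrix (Fin n) (Fin m) (ZMod 2))
    {h : Fin n → ℕ} (β : ∀ u : Fin n, Matrix (Fin (h u)) (Fin m) (ZMod 2)) : Prop :=
  IsBroadcastSolution R B β ∧
  ∀ u a, R u a = 1 → ∃ ℓ : Fin n, ∃ α : Fin (h ℓ) ⊕ Fin m → ZMod 2,
    e m a = α ᵥ* Matrix.fromRows (β ℓ) (Matrix.diagonal (B u))

/-- `(T)_{(R,B)}`: the minimum length of a task-based solution. -/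
noncomputable def Topt (R B : Matrix (Fin n) (Fin m) (ZMod 2)) : ℕ :=
  sInf {s | ∃ (h : Fin n → ℕ) (β : ∀ u : Fin n, Matrix (Fin (h u)) (Fin m) (ZMod 2)),
    IsTaskBased R B β ∧ ∑ u, h u = s}

/-- The edge relation of the problem graph: for distinct requirement pairs `(u,a)`, `(w,b)`,
there is an edge from `v_{(u,a)}` to `v_{(w,b)}` iff `B u b = 1` or `a = b`. -/
def probEdge (R B : Matrix (Fin n) (Fin m) (ZMod 2)) (v w : Vtx R) : Prop :=
  v ≠ w ∧ (B v.1.1 w.1.2 = 1 ∨ v.1.2 = w.1.2)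

/-- A matrix `A` fits a directed graph with edge relation `E`. -/
def Fits {V : Type} (E : V → V → Prop) (A : Matrix V V (ZMod 2)) : Prop :=
  (∀ k, A k k = 1) ∧ ∀ k l, k ≠ l → ¬ E k l → A k l = 0

/-- `minrk₂`: the minimum `F₂`-rank of a matrix fitting the graph. -/
noncomputable def minrk {V : Type} [Fintype V] (E : V → V → Prop) : ℕ :=
  sInf {r | ∃ A : Matrix V V (ZMod 2), Fits E A ∧ A.rank = r}

/-- `rminrk₂`: the minimum `F₂`-rank of a matrix in `𝒜` fitting the graph. -/
noncomputable def rminrk {V : Type} [Fintype V] (E : V → V → Prop)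
    (𝒜 : Set (Matrix V V (ZMod 2))) : ℕ :=
  sInf {r | ∃ A ∈ 𝒜, Fits E A ∧ A.rank = r}

/-- The column repetition function `φ_{(R,B)}`: the column of `φ(A)` indexed by
`v_{(u,a)}` is the `a`-th column of `A`. -/
def phi (R : Matrix (Fin n) (Fin m) (ZMod 2))
    (A : Matrix (Vtx R) (Fin m) (ZMod 2)) : Matrix (Vtx R) (Vtx R) (ZMod 2) :=
  Matrix.of fun k v => A k v.1.2

/-- The sender neighborhood `N_u = {v_{(w,b)} ∈ V : B u b = 1}`. -/
def senderNbhd (R B : Matrix (Fin n) (Fin m) (ZMod 2)) (u : Fin n) : Set (Vtx R) :=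
  {v | B u v.1.2 = 1}

/-- A neighborhood partition `{Ñ_1, …, Ñ_n}`. -/
def IsNbhdPartition (R B : Matrix (Fin n) (Fin m) (ZMod 2))
    (N : Fin n → Set (Vtx R)) : Prop :=
  (∀ i, N i ⊆ senderNbhd R B i) ∧
  (∀ i j, i ≠ j → Disjoint (N i) (N j)) ∧
  (⋃ i, N i) = Set.univ

open Classical in
/-- `R^(i)`: the request matrix of the EIC subproblem induced by `Ñ_i`; it has ones
exactly at the requirement pairs whose vertex lies in `Ñ_i`. -/
noncomputable def Rsub (R : Matrix (Fin n) (Fin m) (ZMod 2))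
    (N : Fin n → Set (Vtx R)) (i : Fin n) : Matrix (Fin n) (Fin m) (ZMod 2) :=
  Matrix.of fun u a =>
    if hr : R u a = 1 then (if (⟨(u, a), hr⟩ : Vtx R) ∈ N i then 1 else 0) else 0

open Classical in
/-- `B^(i)`: the has-matrix of the EIC subproblem induced by `Ñ_i`; it agrees with `B`
on the columns of blocks requested in `Ñ_i` and is zero elsewhere. -/
noncomputable def Bsub (R B : Matrix (Fin n) (Fin m) (ZMod 2))
    (N : Fin n → Set (Vtx R)) (i : Fin n) : Matrix (Fin n) (Fin m) (ZMod 2) :=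
  Matrix.of fun u a => if ∃ v ∈ N i, v.1.2 = a then B u a else 0

/-- `Cl` is a clique for the edge relation `E`. -/
def IsClique {V : Type} (E : V → V → Prop) (Cl : Set V) : Prop :=
  ∀ k ∈ Cl, ∀ l ∈ Cl, k ≠ l → E k l

/-- `I` is an independent set for the edge relation `E` (no edge in either direction). -/
def IsIndep {V : Type} (E : V → V → Prop) (I : Set V) : Prop :=
  ∀ k ∈ I, ∀ l ∈ I, k ≠ l → ¬ E k l ∧ ¬ E l k

/-- `χ(Ḡ|_S)`: the minimum number of cliques of the induced subgraph `G|_S`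
needed to partition `S`. -/
noncomputable def cliqueCoverNum {V : Type} (E : V → V → Prop) (S : Set V) : ℕ :=
  sInf {t | ∃ Cl : Fin t → Set V, (∀ i, Cl i ⊆ S) ∧ (∀ i, IsClique E (Cl i)) ∧
    (∀ i j, i ≠ j → Disjoint (Cl i) (Cl j)) ∧ (⋃ i, Cl i) = S}

/-- `χ(G)`: the minimum number of independent sets of `G` needed to partition
its vertex set. -/
noncomputable def chromNum {V : Type} [Fintype V] (E : V → V → Prop) : ℕ :=
  sInf {t | ∃ I : Fin t → Set V, (∀ i, IsIndep E (I i)) ∧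
    (∀ i j, i ≠ j → Disjoint (I i) (I j)) ∧ (⋃ i, I i) = Set.univ}

/-- `ω(Ḡ|_S)`: the maximum size of an independent set of the induced subgraph `G|_S`. -/
noncomputable def indepNum {V : Type} (E : V → V → Prop) (S : Set V) : ℕ :=
  sSup {t | ∃ I ⊆ S, IsIndep E I ∧ I.ncard = t}

/-- The set of neighborhood-cliques: vertex sets of maximal cliques of the induced
subgraphs `G|_{N_i}`, over all senders `i`. -/
def nbhdCliques (R B : Matrix (Fin n) (Fin m) (ZMod 2)) : Set (Set (Vtx R)) :=
  {Cl | ∃ i : Fin n, Cl ⊆ senderNbhd R B i ∧ IsClique (probEdge R B) Cl ∧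
    ∀ Cl', Cl ⊆ Cl' → Cl' ⊆ senderNbhd R B i → IsClique (probEdge R B) Cl' → Cl' = Cl}

/-!
Broadcasting, for every clique of a clique cover, the sum of the blocks requested in it serves every
requirement pair of the clique, so `C ≤ χ(Ḡ)`.

Fix an optimal task-based solution and let `Ñ_i` collect the pairs for which node `i` is
responsible. The requesters of an independent set hold none of the blocks requested in it, and these
blocks are distinct; decoding all of them from the broadcast of node `i` alone takes at least as
many rows, so `ω(Ḡ|_{Ñ_i})` is at most the number `h_i` of rows broadcast by `i`.

A requirement pair of node `i` itself has an edge to every vertex of `N_i`. Its colour is therefore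
missing on `Ñ_i`, and `|Ñ_i| ≤ (χ(G) - 1) · ω(Ḡ|_{Ñ_i})`. Summing over `i` and comparing with the
hypothesis gives `χ(Ḡ) < ∑ ω(Ḡ|_{Ñ_i})`.
-/

section Digraph

variable {V : Type} {E : V → V → Prop}

lemma IsClique.of_subsingleton {S : Set V} (hS : S.Subsingleton) : IsClique E S :=
  fun _ hk _ hl hkl => absurd (hS hk hl) hkl

lemma IsIndep.of_subsingleton {S : Set V} (hS : S.Subsingleton) : IsIndep E S :=
  fun _ hk _ hl hkl => absurd (hS hk hl) hkl

lemma IsIndep.mono {I J : Set V} (hJ : IsIndep E J) (hIJ : I ⊆ J) : IsIndep E I :=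
  fun k hk l hl => hJ k (hIJ hk) l (hIJ hl)

lemma exists_subsingleton_partition (S : Set V) [Finite S] :
    ∃ P : Fin (Nat.card S) → Set V, (∀ i, P i ⊆ S) ∧ (∀ i, (P i).Subsingleton) ∧
      (∀ i j, i ≠ j → Disjoint (P i) (P j)) ∧ (⋃ i, P i) = S := by
  let enum := (Finite.equivFin S).symm
  refine ⟨fun i => {(enum i : V)}, fun i => by simp, fun i => Set.subsingleton_singleton,
    fun i j hij => Set.disjoint_singleton.mpr fun h => ?_, ?_⟩
  · exact hij (enum.injective (Subtype.val_injective h))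
  · rw [Set.iUnion_singleton_eq_range]
    exact (enum.surjective.range_comp Subtype.val).trans Subtype.range_coe

variable (E) in
lemma exists_cliqueCover (S : Set V) [Finite S] :
    ∃ Cl : Fin (cliqueCoverNum E S) → Set V, (∀ i, IsClique E (Cl i)) ∧ (⋃ i, Cl i) = S := by
  obtain ⟨P, hPS, hP, hdisj, hcover⟩ := exists_subsingleton_partition S
  have attained : cliqueCoverNum E S ∈ _ :=
    Nat.sInf_mem ⟨_, P, hPS, fun i => IsClique.of_subsingleton (hP i), hdisj, hcover⟩
  obtain ⟨Cl, -, hCl, -, hS⟩ := attained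
  exact ⟨Cl, hCl, hS⟩

variable (E) in
lemma exists_coloring [Fintype V] :
    ∃ I : Fin (chromNum E) → Set V, (∀ i, IsIndep E (I i)) ∧ (⋃ i, I i) = Set.univ := by
  obtain ⟨P, -, hP, hdisj, hcover⟩ := exists_subsingleton_partition (Set.univ : Set V)
  have attained : chromNum E ∈ _ :=
    Nat.sInf_mem ⟨_, P, fun i => IsIndep.of_subsingleton (hP i), hdisj, hcover⟩
  obtain ⟨I, hI, -, huniv⟩ := attained
  exact ⟨I, hI, huniv⟩

lemma IsIndep.ncard_le_indepNum {I S : Set V} [Finite S] (hI : IsIndep E I) (hIS : I ⊆ S) :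
    I.ncard ≤ indepNum E S := by
  refine le_csSup ⟨S.ncard, ?_⟩ ⟨I, hIS, hI, rfl⟩
  rintro _ ⟨J, hJS, -, rfl⟩
  exact Set.ncard_le_ncard hJS

lemma ncard_le_mul_indepNum_of_forall_edge [Fintype V] {S : Set V} {v : V} (hv : v ∉ S)
    (hE : ∀ w ∈ S, E v w) : S.ncard ≤ (chromNum E - 1) * indepNum E S := by
  obtain ⟨I, hI, hcover⟩ := exists_coloring E
  obtain ⟨j₀, hj₀⟩ := Set.iUnion_eq_univ_iff.mp hcover v
  have subset_other_colors : S ⊆ ⋃ j ∈ Finset.univ.erase j₀, S ∩ I j := by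
    intro w hw
    obtain ⟨j, hj⟩ := Set.iUnion_eq_univ_iff.mp hcover w
    have hne : j ≠ j₀ := by
      rintro rfl
      exact (hI j v hj₀ w hj fun h => hv (h ▸ hw)).1 (hE w hw)
    simp only [Set.mem_iUnion]
    exact ⟨j, Finset.mem_erase_of_ne_of_mem hne (Finset.mem_univ j), hw, hj⟩
  calc S.ncard
      ≤ (⋃ j ∈ Finset.univ.erase j₀, S ∩ I j).ncard := Set.ncard_le_ncard subset_other_colors
    _ ≤ ∑ j ∈ Finset.univ.erase j₀, (S ∩ I j).ncard := Finset.set_ncard_biUnion_le _ _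
    _ ≤ (Finset.univ.erase j₀).card * indepNum E S :=
        Finset.sum_le_card_nsmul _ _ _ fun j _ =>
          ((hI j).mono Set.inter_subset_right).ncard_le_indepNum Set.inter_subset_left
    _ = (chromNum E - 1) * indepNum E S := by
        rw [Finset.card_erase_of_mem (Finset.mem_univ j₀), Finset.card_fin]

lemma card_le_mul_sum_indepNum_of_forall_edge [Fintype V] {ι : Type*} [Fintype ι]
    {N : ι → Set V} {v : ι → V} (hcover : (⋃ i, N i) = Set.univ) (hv : ∀ i, v i ∉ N i)
    (hE : ∀ i, ∀ w ∈ N i, E (v i) w) :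
    Fintype.card V ≤ (chromNum E - 1) * ∑ i, indepNum E (N i) :=
  calc Fintype.card V
      = (⋃ i, N i).ncard := by rw [hcover, Set.ncard_univ, Nat.card_eq_fintype_card]
    _ ≤ ∑ i, (N i).ncard := Set.ncard_iUnion_le_of_fintype N
    _ ≤ ∑ i, (chromNum E - 1) * indepNum E (N i) :=
        Finset.sum_le_sum fun i _ => ncard_le_mul_indepNum_of_forall_edge (hv i) (hE i)
    _ = (chromNum E - 1) * ∑ i, indepNum E (N i) := Finset.mul_sum .. |>.symm

end Digraph

section Decoding

variable {K ι κ μ : Type*} [Fintype ι] [Fintype μ] [DecidableEq μ]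

/-- A receiver with side information `b` (it knows block `c` when `b c ≠ 0`) can recover the
linear combination of the blocks with coefficients `x` from the broadcast `β`. The formula is the
one spelled out in `IsCentralizedSolution`, `IsBroadcastSolution` and `IsTaskBased`. -/
def Decodes [Semiring K] (β : Matrix ι μ K) (b x : μ → K) : Prop :=
  ∃ α : ι ⊕ μ → K, x = α ᵥ* Matrix.fromRows β (Matrix.diagonal b)

lemma Decodes.exists_vecMul_apply_eq [Semiring K] {β : Matrix ι μ K} {b x : μ → K}
    (h : Decodes β b x) : ∃ γ : ι → K, ∀ c, b c = 0 → x c = (γ ᵥ* β) c := by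
  obtain ⟨α, rfl⟩ := h
  refine ⟨α ∘ Sum.inl, fun c hc => ?_⟩
  simp [Matrix.vecMul_fromRows, Matrix.vecMul_diagonal, hc]

lemma Decodes.exists_apply_ne_zero [Semiring K] {β : Matrix ι μ K} {b x : μ → K}
    (h : Decodes β b x) {c : μ} (hb : b c = 0) (hx : x c ≠ 0) : ∃ i, β i c ≠ 0 := by
  obtain ⟨γ, hγ⟩ := h.exists_vecMul_apply_eq
  by_contra! hβ
  exact hx (by simp [hγ c hb, Matrix.vecMul, dotProduct, hβ])

lemma Decodes.of_row [DivisionRing K] {β : Matrix ι μ K} {b x : μ → K} (i : ι)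
    (h : ∀ c, b c = 0 → x c = β i c) : Decodes β b x := by
  classical
  refine ⟨Sum.elim (Pi.single i 1) fun c => (x c - β i c) / b c, funext fun c => ?_⟩
  simp only [Matrix.vecMul_fromRows, Sum.elim_comp_inl, Sum.elim_comp_inr, Pi.add_apply,
    Matrix.vecMul_diagonal, Matrix.single_one_vecMul, Matrix.row]
  by_cases hc : b c = 0
  · simp [hc, h c hc]
  · rw [div_mul_cancel₀ _ hc, add_sub_cancel]

lemma card_le_card_of_decodes [CommRing K] [StrongRankCondition K] [Fintype κ]
    {β : Matrix ι μ K} {b : κ → μ → K} {a : κ → μ} (ha : Function.Injective a)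
    (hb : ∀ v w, b v (a w) = 0) (h : ∀ v, Decodes β (b v) (Pi.single (a v) 1)) :
    Fintype.card κ ≤ Fintype.card ι := by
  classical
  choose γ hγ using fun v => (h v).exists_vecMul_apply_eq
  have decoder_mul : Matrix.of γ * β.submatrix id a = 1 := by
    ext v w
    calc (Matrix.of γ * β.submatrix id a) v w
        = (γ v ᵥ* β) (a w) := rfl
      _ = (Pi.single (a v) 1 : μ → K) (a w) := (hγ v (a w) (hb v w)).symm
      _ = (1 : Matrix κ κ K) v w := by
          simp only [Pi.single_apply, Matrix.one_apply, ha.eq_iff, eq_comm]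
  calc Fintype.card κ
      = (Matrix.of γ * β.submatrix id a).rank := by rw [decoder_mul, Matrix.rank_one]
    _ ≤ (Matrix.of γ).rank := Matrix.rank_mul_le_left _ _
    _ ≤ Fintype.card ι := Matrix.rank_le_card_width _

end Decoding

variable {R B : Matrix (Fin n) (Fin m) (ZMod 2)}

lemma zmod_two_ne_one_iff {x : ZMod 2} : x ≠ 1 ↔ x = 0 := by
  decide +revert

lemma DisjointSupports.apply_eq_zero (hdisj : DisjointSupports R B) (v : Vtx R) :
    B v.1.1 v.1.2 = 0 :=
  zmod_two_ne_one_iff.mp fun hB => hdisj _ _ ⟨hB, v.2⟩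

/-- The broadcast serving a clique: the coefficient vector of the sum of the blocks requested in
`Cl`, each counted once even if several vertices of `Cl` request it. -/
noncomputable def cliqueMessage (Cl : Set (Vtx R)) : Fin m → ZMod 2 :=
  Set.indicator ((fun v => v.1.2) '' Cl) 1

lemma IsClique.cliqueMessage_apply {Cl : Set (Vtx R)} (hCl : IsClique (probEdge R B) Cl)
    {v : Vtx R} (hv : v ∈ Cl) {c : Fin m} (hc : B v.1.1 c = 0) :
    cliqueMessage Cl c = e m v.1.2 c := by
  obtain rfl | hne := eq_or_ne c v.1.2
  · rw [cliqueMessage, Set.indicator_of_mem (Set.mem_image_of_mem _ hv), Pi.one_apply, e,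
      Pi.single_eq_same]
  · rw [cliqueMessage, Set.indicator_of_notMem, e, Pi.single_eq_of_ne hne]
    rintro ⟨w, hw, rfl⟩
    have hvw : v ≠ w := fun h => hne (congrArg (·.1.2) h.symm)
    obtain hB | heq := (hCl v hv w hw hvw).2
    · exact zero_ne_one (hc.symm.trans hB)
    · exact hne heq.symm

variable (R B) in
lemma Copt_le_cliqueCoverNum : Copt R B ≤ cliqueCoverNum (probEdge R B) Set.univ := by
  obtain ⟨Cl, hCl, hcover⟩ := exists_cliqueCover (probEdge R B) Set.univ
  suffices h : IsCentralizedSolution R B (Matrix.of fun i => cliqueMessage (Cl i)) from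
    Nat.sInf_le ⟨_, h⟩
  intro u a hua
  obtain ⟨i, hi⟩ := Set.iUnion_eq_univ_iff.mp hcover ⟨(u, a), hua⟩
  exact Decodes.of_row i fun c hc => ((hCl i).cliqueMessage_apply hi hc).symm

lemma isTaskBased_diagonal (hheld : ∀ u a, R u a = 1 → ∃ w, B w a = 1) :
    IsTaskBased R B (h := fun _ => m) fun u => Matrix.diagonal (B u) := by
  have row_eq {w : Fin n} {a : Fin m} (hw : B w a = 1) (c : Fin m) :
      e m a c = Matrix.diagonal (B w) a c := by
    simp only [e, Pi.single_apply, Matrix.diagonal_apply, hw, eq_comm]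
  refine ⟨⟨fun u a hB i => ?_, fun u a hua => ?_⟩, fun u a hua => ?_⟩
  · obtain rfl | hia := eq_or_ne i a
    · exact (Matrix.diagonal_apply_eq (B u) i).trans hB
    · exact Matrix.diagonal_apply_ne _ hia
  · obtain ⟨w, hw⟩ := hheld u a hua
    exact Decodes.of_row (β := vconcat fun u => Matrix.diagonal (B u)) ⟨w, a⟩
      fun c _ => row_eq hw c
  · obtain ⟨w, hw⟩ := hheld u a hua
    exact ⟨w, Decodes.of_row a fun c _ => row_eq hw c⟩

lemma exists_isTaskBased_sum_eq_Topt (hheld : ∀ u a, R u a = 1 → ∃ w, B w a = 1) :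
    ∃ (h : Fin n → ℕ) (β : ∀ u : Fin n, Matrix (Fin (h u)) (Fin m) (ZMod 2)),
      IsTaskBased R B β ∧ ∑ u, h u = Topt R B :=
  have attained : Topt R B ∈ _ := Nat.sInf_mem ⟨_, _, _, isTaskBased_diagonal hheld, rfl⟩
  attained

lemma isNbhdPartition_fibers {f : Vtx R → Fin n} (hf : ∀ v, B (f v) v.1.2 = 1) :
    IsNbhdPartition R B fun i => f ⁻¹' {i} := by
  refine ⟨?_, fun i j hij => Disjoint.preimage f (Set.disjoint_singleton.mpr hij), ?_⟩
  · rintro _ v rfl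
    exact hf v
  · rw [← Set.preimage_iUnion, Set.iUnion_of_singleton, Set.preimage_univ]

lemma IsTaskBased.exists_isNbhdPartition (hdisj : DisjointSupports R B) {h : Fin n → ℕ}
    {β : ∀ u : Fin n, Matrix (Fin (h u)) (Fin m) (ZMod 2)} (hβ : IsTaskBased R B β) :
    ∃ N : Fin n → Set (Vtx R), IsNbhdPartition R B N ∧
      ∀ i, ∀ v ∈ N i, Decodes (β i) (B v.1.1) (e m v.1.2) := by
  have hresp : ∀ v : Vtx R, ∃ i, Decodes (β i) (B v.1.1) (e m v.1.2) :=
    fun v => hβ.2 _ _ v.2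
  choose f hf using hresp
  have sender_holds (v : Vtx R) : B (f v) v.1.2 = 1 := by
    by_contra hB
    obtain ⟨i, hi⟩ := (hf v).exists_apply_ne_zero (hdisj.apply_eq_zero v) (by simp [e])
    exact hi (hβ.1.1 _ _ (zmod_two_ne_one_iff.mp hB) i)
  refine ⟨fun i => f ⁻¹' {i}, isNbhdPartition_fibers sender_holds, ?_⟩
  rintro _ v rfl
  exact hf v

lemma IsIndep.ncard_le_card_of_decodes (hdisj : DisjointSupports R B) {I : Set (Vtx R)}
    (hI : IsIndep (probEdge R B) I) {ι : Type*} [Fintype ι] {β : Matrix ι (Fin m) (ZMod 2)}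
    (hdec : ∀ v ∈ I, Decodes β (B v.1.1) (e m v.1.2)) : I.ncard ≤ Fintype.card ι := by
  classical
  have blocks_injective : Function.Injective fun v : I => v.1.1.2 := by
    intro v w hvw
    by_contra hne
    have hne' := Subtype.coe_ne_coe.mpr hne
    exact (hI v v.2 w w.2 hne').1 ⟨hne', Or.inr hvw⟩
  have blocks_unknown (v w : I) : B v.1.1.1 w.1.1.2 = 0 := by
    obtain rfl | hne := eq_or_ne v w
    · exact hdisj.apply_eq_zero v
    · have hne' := Subtype.coe_ne_coe.mpr hne
      exact zmod_two_ne_one_iff.mp fun hB => (hI v v.2 w w.2 hne').1 ⟨hne', Or.inl hB⟩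
  rw [← Nat.card_coe_set_eq, Nat.card_eq_fintype_card]
  exact card_le_card_of_decodes blocks_injective blocks_unknown fun v => hdec v v.2

lemma indepNum_le_card_of_decodes (hdisj : DisjointSupports R B) {S : Set (Vtx R)}
    {ι : Type*} [Fintype ι] {β : Matrix ι (Fin m) (ZMod 2)}
    (hdec : ∀ v ∈ S, Decodes β (B v.1.1) (e m v.1.2)) :
    indepNum (probEdge R B) S ≤ Fintype.card ι := by
  refine csSup_le' ?_
  rintro _ ⟨I, hIS, hI, rfl⟩
  exact hI.ncard_le_card_of_decodes hdisj fun v hv => hdec v (hIS hv)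

lemma IsNbhdPartition.card_le_mul_sum_indepNum (hdisj : DisjointSupports R B)
    (hreq : ∀ u, ∃ a, R u a = 1) {N : Fin n → Set (Vtx R)} (hN : IsNbhdPartition R B N) :
    Fintype.card (Vtx R) ≤
      (chromNum (probEdge R B) - 1) * ∑ i, indepNum (probEdge R B) (N i) := by
  choose a ha using hreq
  let request (i : Fin n) : Vtx R := ⟨(i, a i), ha i⟩
  have not_mem (i : Fin n) : request i ∉ N i := fun h => hdisj _ _ ⟨hN.1 i h, ha i⟩
  refine card_le_mul_sum_indepNum_of_forall_edge hN.2.2 not_mem fun i w hw => ⟨?_, ?_⟩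
  · rintro rfl
    exact not_mem i hw
  · exact Or.inl (hN.1 i hw)

theorem chrom_gap {n m : ℕ}
    (R B : Matrix (Fin n) (Fin m) (ZMod 2)) (hdisj : DisjointSupports R B)
    (hreq : ∀ u, ∃ a, R u a = 1)
    (hheld : ∀ u a, R u a = 1 → ∃ w, B w a = 1)
    (hgap : (chromNum (probEdge R B) - 1) * cliqueCoverNum (probEdge R B) Set.univ
      < Fintype.card (Vtx R)) :
    ∃ (h : Fin n → ℕ) (β : ∀ u : Fin n, Matrix (Fin (h u)) (Fin m) (ZMod 2))
      (N : Fin n → Set (Vtx R)),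
      IsTaskBased R B β ∧ (∑ u, h u) = Topt R B ∧
      IsNbhdPartition R B N ∧
      (∀ i : Fin n, ∀ v ∈ N i, ∃ α : Fin (h i) ⊕ Fin m → ZMod 2,
        e m v.1.2 = α ᵥ* Matrix.fromRows (β i) (Matrix.diagonal (B v.1.1))) ∧
      Copt R B ≤ cliqueCoverNum (probEdge R B) Set.univ ∧
      cliqueCoverNum (probEdge R B) Set.univ < ∑ i, indepNum (probEdge R B) (N i) ∧
      ∑ i, indepNum (probEdge R B) (N i) ≤ Topt R B := by
  obtain ⟨h, β, hβ, hlength⟩ := exists_isTaskBased_sum_eq_Topt hheld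
  obtain ⟨N, hN, hdec⟩ := hβ.exists_isNbhdPartition hdisj
  have cover_lt : cliqueCoverNum (probEdge R B) Set.univ < ∑ i, indepNum (probEdge R B) (N i) :=
    lt_of_mul_lt_mul_left (hgap.trans_le (hN.card_le_mul_sum_indepNum hdisj hreq)) (Nat.zero_le _)
  have indepNum_le (i : Fin n) : indepNum (probEdge R B) (N i) ≤ h i := by
    simpa only [Fintype.card_fin] using indepNum_le_card_of_decodes hdisj (hdec i)
  exact ⟨h, β, N, hβ, hlength, hN, hdec, Copt_le_cliqueCoverNum R B, cover_lt,
    (Finset.sum_le_sum fun i _ => indepNum_le i).trans_eq hlength⟩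

end EIC
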